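/- arXiv:1905.00471 — 5 statements merged into one kernel-verified Lean document; each statement's English description precedes it below -/
import Mathlib

section
/- Let (Λ, w, π) be a balanced Γ-fair graph over a weighted bidirected graph (Γ, δ, ‾), with a chosen balanced involution ε ↦ ε̄ on E(Λ). Assume that for any two vertices α, β of Λ there exists a directed path in Λ from α to β, and that for every directed closed path in Λ (a path from a vertex back to itself) the product of the weights of its edges equals 1. Then there exists a function d: V(Λ) → (0,∞) such that w(ε) = d(β)/d(α) for every edge ε: α → β of Λ, and consequently for every edge e: a → b of Γ: (i) for every vertex α of Λ with π(α) = a, the family {d(target(ε))/d(source(ε)) : ε ∈ E(Λ), source(ε) = α, π(ε) = e} is unconditionally summable with sum δ(e); and (ii) for every vertex β of Λ with π(β) = b, the family {d(source(ε))/d(target(ε)) : ε ∈ E(Λ), target(ε) = β, π(ε) = e} is unconditionally summable with sum δ(e). -/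
/-- A directed multigraph. -/
structure DiGraph where
  V : Type
  E : Type
  src : E → V
  tgt : E → V

/-- A graph homomorphism between directed multigraphs. -/
structure DiGraphHom (Λ Γ : DiGraph) where
  onV : Λ.V → Γ.V
  onE : Λ.E → Γ.E
  map_src : ∀ ε, Γ.src (onE ε) = onV (Λ.src ε)
  map_tgt : ∀ ε, Γ.tgt (onE ε) = onV (Λ.tgt ε)

/-- The structure of a weighted bidirected graph on a directed multigraph `Γ`:
a positive weight function `δ` and an involution of edges exchanging sources and
targets and preserving weights. -/
structure BidirectedWeights (Γ : DiGraph) where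
  δ : Γ.E → ℝ
  δ_pos : ∀ e, 0 < δ e
  bar : Γ.E → Γ.E
  bar_bar : ∀ e, bar (bar e) = e
  src_bar : ∀ e, Γ.src (bar e) = Γ.tgt e
  tgt_bar : ∀ e, Γ.tgt (bar e) = Γ.src e
  δ_bar : ∀ e, δ (bar e) = δ e

/-- `(Λ, w, π)` is a `Γ`-fair graph: `w` is a positive weight function and for every
edge `e : a → b` of `Γ` and every vertex `α` of `Λ` over `a`, the weights of edges of `Λ`
with source `α` lying over `e` sum (unconditionally) to `δ e`. -/
def IsFair {Γ Λ : DiGraph} (D : BidirectedWeights Γ) (w : Λ.E → ℝ)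
    (π : DiGraphHom Λ Γ) : Prop :=
  (∀ ε, 0 < w ε) ∧
    ∀ e : Γ.E, ∀ α : Λ.V, π.onV α = Γ.src e →
      HasSum (fun ε : {ε : Λ.E // Λ.src ε = α ∧ π.onE ε = e} => w ε.1) (D.δ e)

/-- Directed paths in a directed multigraph. -/
inductive DiPath (G : DiGraph) : G.V → G.V → Type
  | nil (v : G.V) : DiPath G v v
  | cons {v : G.V} (e : G.E) (p : DiPath G (G.tgt e) v) : DiPath G (G.src e) v

/-- The product of the weights of the edges of a directed path. -/
def DiPath.wprod {G : DiGraph} (w : G.E → ℝ) : ∀ {u v : G.V}, DiPath G u v → ℝ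
  | _, _, .nil _ => 1
  | _, _, .cons e p => w e * p.wprod w

/-!
Since every edge `ε` has a reversal `ε̄`, being joined by a directed path is an equivalence relation
on `Λ.V`. Fix a root in each class and let `d v` be the weight product of any path from the root
to `v`. Returning along a common path and using that closed paths have weight product `1` shows
that `d v` does not depend on the path, so extending it by an edge `ε` gives
`d (tgt ε) = d (src ε) * w ε`. The edges over `e` entering `β` are the reversals of the edges over
`ē` leaving `β`, so the incoming sum of the inverse ratios is the outgoing sum over `ē`, which is
`δ ē = δ e`.
-/

namespace DiPath

variable {G : DiGraph}

/-- Concatenation of directed paths, in the order in which they are traversed. -/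
def comp : ∀ {a b c : G.V}, DiPath G a b → DiPath G b c → DiPath G a c
  | _, _, _, .nil _, q => q
  | _, _, _, .cons e p, q => .cons e (p.comp q)

theorem wprod_comp (w : G.E → ℝ) {a b c : G.V} (p : DiPath G a b) (q : DiPath G b c) :
    (p.comp q).wprod w = p.wprod w * q.wprod w := by
  induction p with
  | nil => simp [comp, wprod]
  | cons e p ih => simp [comp, wprod, ih, mul_assoc]

theorem wprod_pos {w : G.E → ℝ} (hw : ∀ e, 0 < w e) {a b : G.V} (p : DiPath G a b) :
    0 < p.wprod w := by
  induction p with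
  | nil => exact one_pos
  | cons e _ ih => exact mul_pos (hw e) ih

theorem wprod_eq_of_wprod_closed_eq_one {w : G.E → ℝ}
    (hloop : ∀ (v : G.V) (p : DiPath G v v), p.wprod w = 1) {a b : G.V}
    (p q : DiPath G a b) (r : DiPath G b a) : p.wprod w = q.wprod w := by
  have hpr : p.wprod w * r.wprod w = 1 := by rw [← wprod_comp, hloop]
  have hqr : q.wprod w * r.wprod w = 1 := by rw [← wprod_comp, hloop]
  exact mul_right_cancel₀ (right_ne_zero_of_mul_eq_one hpr) (hpr.trans hqr.symm)

theorem nonempty_reverse (hrev : ∀ e, Nonempty (DiPath G (G.tgt e) (G.src e))) {a b : G.V}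
    (p : DiPath G a b) : Nonempty (DiPath G b a) := by
  induction p with
  | nil v => exact ⟨.nil v⟩
  | cons e _ ih => exact ih.map2 comp (hrev e)

end DiPath

namespace DiGraph

variable {G : DiGraph}

theorem exists_root (hrev : ∀ e, Nonempty (DiPath G (G.tgt e) (G.src e))) :
    ∃ root : G.V → G.V, (∀ v, Nonempty (DiPath G (root v) v)) ∧
      ∀ e, root (G.src e) = root (G.tgt e) := by
  let joined : Setoid G.V :=
    { r := fun u v => Nonempty (DiPath G u v)
      iseqv :=
        { refl := fun v => ⟨.nil v⟩
          symm := fun ⟨p⟩ => p.nonempty_reverse hrev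
          trans := Nonempty.map2 DiPath.comp } }
  refine ⟨fun v => (Quotient.mk joined v).out, Quotient.mk_out, fun e => ?_⟩
  have hjoined : joined (G.src e) (G.tgt e) := ⟨.cons e (.nil _)⟩
  exact congrArg Quotient.out (Quotient.sound hjoined)

/-- `d` is a dimension function for the edge weights `w`: it is a positive function on vertices
whose ratio along each edge is the weight of that edge. -/
structure IsDimensionFunction (w : G.E → ℝ) (d : G.V → ℝ) : Prop where
  pos : ∀ v, 0 < d v
  weight_eq_div : ∀ e, w e = d (G.tgt e) / d (G.src e)

theorem exists_isDimensionFunction {w : G.E → ℝ} (hw : ∀ e, 0 < w e)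
    (hrev : ∀ e, Nonempty (DiPath G (G.tgt e) (G.src e)))
    (hloop : ∀ (v : G.V) (p : DiPath G v v), p.wprod w = 1) :
    ∃ d, IsDimensionFunction w d := by
  obtain ⟨root, hpath, hroot⟩ := exists_root hrev
  have p (v : G.V) : DiPath G (root v) v := (hpath v).some
  have wprod_eq : ∀ {u v} (q : DiPath G u v), u = root v → (p v).wprod w = q.wprod w := by
    rintro _ v q rfl
    obtain ⟨r⟩ := q.nonempty_reverse hrev
    exact DiPath.wprod_eq_of_wprod_closed_eq_one hloop (p v) q r
  refine ⟨fun v => (p v).wprod w, fun v => (p v).wprod_pos hw, fun e => ?_⟩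
  have hextend : (p (G.tgt e)).wprod w = (p (G.src e)).wprod w * w e := by
    rw [wprod_eq ((p (G.src e)).comp (.cons e (.nil _))) (hroot e), DiPath.wprod_comp,
      DiPath.wprod, DiPath.wprod, mul_one]
  rw [hextend, mul_div_cancel_left₀ _ ((p _).wprod_pos hw).ne']

end DiGraph

theorem IsFair.hasSum_weight_bar {Γ Λ : DiGraph} {D : BidirectedWeights Γ} {w : Λ.E → ℝ}
    {π : DiGraphHom Λ Γ} (hfair : IsFair D w π) {bar : Λ.E → Λ.E}
    (hbar : Function.Involutive bar) (hsrc_bar : ∀ ε, Λ.src (bar ε) = Λ.tgt ε)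
    (hπ_bar : ∀ ε, π.onE (bar ε) = D.bar (π.onE ε)) {e : Γ.E} {β : Λ.V}
    (hβ : π.onV β = Γ.tgt e) :
    HasSum (fun ε : {ε : Λ.E // Λ.tgt ε = β ∧ π.onE ε = e} => w (bar ε.1)) (D.δ e) := by
  have hbarΓ : Function.Involutive D.bar := D.bar_bar
  let incomingEquivOutgoing : {ε : Λ.E // Λ.tgt ε = β ∧ π.onE ε = e} ≃
      {ε : Λ.E // Λ.src ε = β ∧ π.onE ε = D.bar e} :=
    hbar.toPerm.subtypeEquiv fun ε => by
      rw [hbar.coe_toPerm, hsrc_bar, hπ_bar, hbarΓ.injective.eq_iff]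
  have houtgoing := hfair.2 (D.bar e) β (hβ.trans (D.src_bar e).symm)
  rw [D.δ_bar] at houtgoing
  exact incomingEquivOutgoing.hasSum_iff.mpr houtgoing

theorem balanced_fair_graph_dimension_function_general
    {Γ Λ : DiGraph} (D : BidirectedWeights Γ) (w : Λ.E → ℝ) (π : DiGraphHom Λ Γ)
    (hfair : IsFair D w π) (barΛ : Λ.E → Λ.E)
    (hbar_bar : ∀ ε, barΛ (barΛ ε) = ε)
    (hsrc_bar : ∀ ε, Λ.src (barΛ ε) = Λ.tgt ε)
    (hπ_bar : ∀ ε, π.onE (barΛ ε) = D.bar (π.onE ε))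
    (hloop : ∀ (v : Λ.V) (p : DiPath Λ v v), p.wprod w = 1) :
    ∃ d : Λ.V → ℝ, (∀ α, 0 < d α) ∧
      (∀ ε : Λ.E, w ε = d (Λ.tgt ε) / d (Λ.src ε)) ∧
      (∀ e : Γ.E, ∀ α : Λ.V, π.onV α = Γ.src e →
        HasSum (fun ε : {ε : Λ.E // Λ.src ε = α ∧ π.onE ε = e} =>
          d (Λ.tgt ε.1) / d (Λ.src ε.1)) (D.δ e)) ∧
      (∀ e : Γ.E, ∀ β : Λ.V, π.onV β = Γ.tgt e →
        HasSum (fun ε : {ε : Λ.E // Λ.tgt ε = β ∧ π.onE ε = e} =>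
          d (Λ.src ε.1) / d (Λ.tgt ε.1)) (D.δ e)) := by
  have htgt_bar (ε : Λ.E) : Λ.tgt (barΛ ε) = Λ.src ε := by rw [← hsrc_bar, hbar_bar]
  have hrev (ε : Λ.E) : Nonempty (DiPath Λ (Λ.tgt ε) (Λ.src ε)) := by
    rw [← hsrc_bar ε, ← htgt_bar ε]
    exact ⟨.cons (barΛ ε) (.nil _)⟩
  obtain ⟨d, hd⟩ := DiGraph.exists_isDimensionFunction hfair.1 hrev hloop
  have hw_bar (ε : Λ.E) : w (barΛ ε) = d (Λ.src ε) / d (Λ.tgt ε) := by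
    rw [hd.weight_eq_div, hsrc_bar, htgt_bar]
  refine ⟨d, hd.pos, hd.weight_eq_div, fun e α hα => ?_, fun e β hβ => ?_⟩
  · simpa only [← hd.weight_eq_div] using hfair.2 e α hα
  · simpa only [← hw_bar] using hfair.hasSum_weight_bar hbar_bar hsrc_bar hπ_bar hβ

theorem balanced_fair_graph_dimension_function
    {Γ Λ : DiGraph} (D : BidirectedWeights Γ) (w : Λ.E → ℝ) (π : DiGraphHom Λ Γ)
    (hfair : IsFair D w π)
    -- a chosen balanced involution on the edges of `Λ`
    (barΛ : Λ.E → Λ.E)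
    (hbar_bar : ∀ ε, barΛ (barΛ ε) = ε)
    (hsrc_bar : ∀ ε, Λ.src (barΛ ε) = Λ.tgt ε)
    (htgt_bar : ∀ ε, Λ.tgt (barΛ ε) = Λ.src ε)
    (hw_bar : ∀ ε, w ε * w (barΛ ε) = 1)
    (hπ_bar : ∀ ε, π.onE (barΛ ε) = D.bar (π.onE ε))
    -- connectivity by directed paths
    (hconn : ∀ α β : Λ.V, Nonempty (DiPath Λ α β))
    -- every directed closed path has weight product 1
    (hloop : ∀ (v : Λ.V) (p : DiPath Λ v v), p.wprod w = 1) :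
    ∃ d : Λ.V → ℝ, (∀ α, 0 < d α) ∧
      (∀ ε : Λ.E, w ε = d (Λ.tgt ε) / d (Λ.src ε)) ∧
      (∀ e : Γ.E, ∀ α : Λ.V, π.onV α = Γ.src e →
        HasSum (fun ε : {ε : Λ.E // Λ.src ε = α ∧ π.onE ε = e} =>
          d (Λ.tgt ε.1) / d (Λ.src ε.1)) (D.δ e)) ∧
      (∀ e : Γ.E, ∀ β : Λ.V, π.onV β = Γ.tgt e →
        HasSum (fun ε : {ε : Λ.E // Λ.tgt ε = β ∧ π.onE ε = e} =>
          d (Λ.src ε.1) / d (Λ.tgt ε.1)) (D.δ e)) :=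
  balanced_fair_graph_dimension_function_general D w π hfair barΛ hbar_bar hsrc_bar hπ_bar hloop
end

section
/- Let (Λ, w, π) be a balanced Γ-fair graph over a weighted bidirected graph (Γ, δ, ‾). Then for every edge e: a → b of Γ and every vertex α of Λ with π(α) = a, the set {ε ∈ E(Λ) : source(ε) = α, π(ε) = e} is finite and its cardinality is at most δ(e)². -/
/-- A `Γ`-fair graph is balanced if there exists an involution of the edges of `Λ`
exchanging sources and targets, inverting weights, and lying over the involution of `Γ`. -/
def IsBalanced {Γ Λ : DiGraph} (D : BidirectedWeights Γ) (w : Λ.E → ℝ)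
    (π : DiGraphHom Λ Γ) : Prop :=
  ∃ barΛ : Λ.E → Λ.E,
    (∀ ε, barΛ (barΛ ε) = ε) ∧
    (∀ ε, Λ.src (barΛ ε) = Λ.tgt ε) ∧
    (∀ ε, Λ.tgt (barΛ ε) = Λ.src ε) ∧
    (∀ ε, w ε * w (barΛ ε) = 1) ∧
    (∀ ε, π.onE (barΛ ε) = D.bar (π.onE ε))

/-!
Fairness bounds every weight over `e` or `ē` by `δ e = δ ē`. Since `w ε * w ε̄ = 1`, the bound on
`w ε̄` becomes the lower bound `(δ e)⁻¹ ≤ w ε`. The weights in a fiber over `e` sum to `δ e` and are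
each at least `(δ e)⁻¹`, so there are at most `(δ e)²` of them.
-/

theorem card_nsmul_le_of_hasSum {ι M : Type*} [AddCommMonoid M] [PartialOrder M]
    [IsOrderedAddMonoid M] [TopologicalSpace M] [OrderClosedTopology M] [Finite ι]
    {f : ι → M} {a c : M} (hf : HasSum f a) (hc : ∀ i, c ≤ f i) : Nat.card ι • c ≤ a := by
  have := Fintype.ofFinite ι
  simpa using hasSum_le hc (hasSum_fintype fun _ : ι => c) hf

namespace IsFair

variable {Γ Λ : DiGraph} {D : BidirectedWeights Γ} {w : Λ.E → ℝ} {π : DiGraphHom Λ Γ}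

theorem weight_le_delta (hfair : IsFair D w π) (ε : Λ.E) : w ε ≤ D.δ (π.onE ε) := by
  obtain ⟨hw, hsum⟩ := hfair
  exact le_hasSum (hsum (π.onE ε) (Λ.src ε) (π.map_src ε).symm) ⟨ε, rfl, rfl⟩
    fun ε' _ => (hw ε'.1).le

theorem inv_delta_le_weight (hfair : IsFair D w π) {ε ε' : Λ.E}
    (hπ : π.onE ε' = D.bar (π.onE ε)) (hmul : 1 ≤ w ε * w ε') :
    (D.δ (π.onE ε))⁻¹ ≤ w ε := by
  have hε' : w ε' ≤ D.δ (π.onE ε) := by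
    simpa only [hπ, D.δ_bar] using hfair.weight_le_delta ε'
  rw [inv_le_iff_one_le_mul₀ (D.δ_pos _)]
  exact hmul.trans (mul_le_mul_of_nonneg_left hε' (hfair.1 ε).le)

end IsFair

theorem fiber_finite_card_le_delta_sq_general
    {Γ Λ : DiGraph} {D : BidirectedWeights Γ} {w : Λ.E → ℝ} {π : DiGraphHom Λ Γ}
    (hfair : IsFair D w π) {e : Γ.E} {α : Λ.V} (hα : π.onV α = Γ.src e)
    (hrev : ∀ ε, Λ.src ε = α → π.onE ε = e → ∃ ε', π.onE ε' = D.bar e ∧ 1 ≤ w ε * w ε') :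
    {ε : Λ.E | Λ.src ε = α ∧ π.onE ε = e}.Finite ∧
      (Nat.card {ε : Λ.E | Λ.src ε = α ∧ π.onE ε = e} : ℝ) ≤ (D.δ e) ^ 2 := by
  let fiber := {ε : Λ.E | Λ.src ε = α ∧ π.onE ε = e}
  have hsum : HasSum (fun ε : fiber => w ε) (D.δ e) := hfair.2 e α hα
  have hlower : ∀ ε : fiber, (D.δ e)⁻¹ ≤ w ε := by
    rintro ⟨ε, hsrc, rfl⟩
    obtain ⟨ε', hπ, hmul⟩ := hrev ε hsrc rfl
    exact hfair.inv_delta_le_weight hπ hmul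
  have hinv : 0 < (D.δ e)⁻¹ := inv_pos.2 (D.δ_pos e)
  have hfinite : Finite fiber :=
    .of_summable_const hinv (.of_nonneg_of_le (fun _ => hinv.le) hlower hsum.summable)
  refine ⟨hfinite, ?_⟩
  have hcard : (Nat.card fiber : ℝ) * (D.δ e)⁻¹ ≤ D.δ e := by
    simpa only [nsmul_eq_mul] using card_nsmul_le_of_hasSum hsum hlower
  rwa [mul_inv_le_iff₀ (D.δ_pos e), ← sq] at hcard

theorem fiber_finite_card_le_delta_sq
    {Γ Λ : DiGraph} (D : BidirectedWeights Γ) (w : Λ.E → ℝ) (π : DiGraphHom Λ Γ)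
    (hfair : IsFair D w π) (hbal : IsBalanced D w π) :
    ∀ e : Γ.E, ∀ α : Λ.V, π.onV α = Γ.src e →
      {ε : Λ.E | Λ.src ε = α ∧ π.onE ε = e}.Finite ∧
        (Nat.card {ε : Λ.E | Λ.src ε = α ∧ π.onE ε = e} : ℝ) ≤ (D.δ e) ^ 2 := by
  obtain ⟨bar, -, -, -, hmul, hπ⟩ := hbal
  exact fun e α hα => fiber_finite_card_le_delta_sq_general hfair hα fun ε _ hε =>
    ⟨bar ε, hε ▸ hπ ε, (hmul ε).ge⟩
end

section
/- Let ι be a finite type and f: ι → ℝ a function with f(i) > 0 for all i ∈ ι. If the multiset {f(i) : i ∈ ι} equals the multiset {f(i)⁻¹ : i ∈ ι} (images of f and of i ↦ f(i)⁻¹ over all of ι, counted with multiplicity), then there exists a permutation σ of ι with σ ∘ σ = id and f(σ(i)) = f(i)⁻¹ for every i ∈ ι. -/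
/-!
Equality of the two multisets says that the fibre of `f` over `c` is as large as the fibre over
`c⁻¹`, so some permutation `ρ`, not necessarily involutive, satisfies `f (ρ i) = (f i)⁻¹`.
To make it an involution, keep `ρ` only where `f i < (f i)⁻¹`, go back by `ρ⁻¹` where
`(f i)⁻¹ < f i`, and fix every `i` with `f i = (f i)⁻¹`. The same construction lifts an involution
of an arbitrary type, where any linear order selects a direction on each two-element orbit.
-/

open Function

theorem exists_equiv_comp_eq_of_map_univ_eq {ι κ α : Type*} [Fintype ι] [Fintype κ]
    {f : ι → α} {g : κ → α} (h : Finset.univ.val.map f = Finset.univ.val.map g) :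
    ∃ e : ι ≃ κ, g ∘ e = f := by
  classical
  have fiber_equiv (c : α) : Nonempty ({i // f i = c} ≃ {k // g k = c}) := by
    have count_eq := congrArg (Multiset.count c) h
    simp only [Multiset.count_map, eq_comm (a := c)] at count_eq
    rw [← Fintype.card_eq, Fintype.card_subtype, Fintype.card_subtype]
    exact count_eq
  exact ⟨Equiv.ofFiberEquiv fun c ↦ (fiber_equiv c).some,
    funext <| Equiv.ofFiberEquiv_map fun c ↦ (fiber_equiv c).some⟩

section InvolutiveLift

variable {ι α : Type*} [LinearOrder α] {τ : α → α} {f : ι → α} {ρ : Equiv.Perm ι} {i : ι}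

/-- The involutive lift of an involution `τ` along `f`, built from an arbitrary permutation `ρ`
lifting `τ`: it moves up by `ρ`, moves down by `ρ⁻¹`, and fixes the points lying over fixed points
of `τ`, where `ρ` itself may act nontrivially. The linear order serves only to orient the
two-element orbits of `τ`. -/
def involutiveLift (τ : α → α) (f : ι → α) (ρ : Equiv.Perm ι) (i : ι) : ι :=
  if f i < τ (f i) then ρ i else if τ (f i) < f i then ρ.symm i else i

theorem involutiveLift_of_lt (hi : f i < τ (f i)) : involutiveLift τ f ρ i = ρ i :=
  if_pos hi

theorem involutiveLift_of_gt (hi : τ (f i) < f i) : involutiveLift τ f ρ i = ρ.symm i := by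
  rw [involutiveLift, if_neg hi.not_gt, if_pos hi]

theorem involutiveLift_of_eq (hi : f i = τ (f i)) : involutiveLift τ f ρ i = i := by
  rw [involutiveLift, if_neg hi.not_lt, if_neg hi.not_gt]

theorem semiconj_involutiveLift (hτ : Involutive τ) (hρ : Semiconj f ρ τ) :
    Semiconj f (involutiveLift τ f ρ) τ := by
  intro i
  rcases lt_trichotomy (f i) (τ (f i)) with hi | hi | hi
  · rw [involutiveLift_of_lt hi, hρ i]
  · rwa [involutiveLift_of_eq hi]
  · rw [involutiveLift_of_gt hi, hρ.inverses_right ρ.rightInverse_symm hτ.leftInverse i]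

theorem involutive_involutiveLift (hτ : Involutive τ) (hρ : Semiconj f ρ τ) :
    Involutive (involutiveLift τ f ρ) := by
  intro i
  have image_value : f (involutiveLift τ f ρ i) = τ (f i) := semiconj_involutiveLift hτ hρ i
  rcases lt_trichotomy (f i) (τ (f i)) with hi | hi | hi
  · have image_gt : τ (f (involutiveLift τ f ρ i)) < f (involutiveLift τ f ρ i) := by
      rwa [image_value, hτ]
    rw [involutiveLift_of_gt image_gt, involutiveLift_of_lt hi, ρ.symm_apply_apply]
  · rw [involutiveLift_of_eq hi, involutiveLift_of_eq hi]
  · have image_lt : f (involutiveLift τ f ρ i) < τ (f (involutiveLift τ f ρ i)) := by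
      rwa [image_value, hτ]
    rw [involutiveLift_of_lt image_lt, involutiveLift_of_gt hi, ρ.apply_symm_apply]

end InvolutiveLift

theorem exists_involutive_perm_semiconj {ι α : Type*} {τ : α → α} {f : ι → α}
    {ρ : Equiv.Perm ι} (hτ : Involutive τ) (hρ : Semiconj f ρ τ) :
    ∃ σ : Equiv.Perm ι, Involutive σ ∧ Semiconj f σ τ := by
  obtain ⟨_, _⟩ := exists_wellFoundedLT α
  have involutive := involutive_involutiveLift hτ hρ
  exact ⟨involutive.toPerm, involutive, semiconj_involutiveLift hτ hρ⟩

theorem exists_involutive_perm_of_multiset_eq_multiset_inv_general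
    {ι α : Type*} [Fintype ι] {τ : α → α} (hτ : Involutive τ) (f : ι → α)
    (h : Finset.univ.val.map f = Finset.univ.val.map fun i ↦ τ (f i)) :
    ∃ σ : Equiv.Perm ι, (⇑σ ∘ ⇑σ = id) ∧ ∀ i, f (σ i) = τ (f i) := by
  obtain ⟨ρ, hρ⟩ := exists_equiv_comp_eq_of_map_univ_eq h.symm
  obtain ⟨σ, σ_involutive, hσ⟩ := exists_involutive_perm_semiconj hτ (congrFun hρ)
  exact ⟨σ, σ_involutive.comp_self, hσ⟩

theorem exists_involutive_perm_of_multiset_eq_multiset_inv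
    {ι : Type} [Fintype ι] (f : ι → ℝ) (hf : ∀ i, 0 < f i)
    (h : Finset.univ.val.map f = Finset.univ.val.map fun i => (f i)⁻¹) :
    ∃ σ : Equiv.Perm ι, (⇑σ ∘ ⇑σ = id) ∧ ∀ i, f (σ i) = (f i)⁻¹ :=
  exists_involutive_perm_of_multiset_eq_multiset_inv_general inv_involutive f h
end

section
/- Let (Γ, δ, ‾) be a weighted bidirected graph. For each vertex a of Γ let J^a be a set; for each edge e: a → b of Γ and each v ∈ J^a, w ∈ J^b let H^e_{vw} be a finite-dimensional complex inner product space, Φ^e_{vw}: H^e_{vw} → H^{ē}_{wv} a conjugate-linear map, and A^e_{vw}: H^{ē}_{wv} → H^e_{vw} an adjoint of Φ^e_{vw}. Assume: (zigzag) Φ^{ē}_{wv} ∘ Φ^e_{vw} = id on H^e_{vw} for every edge e: a → b of Γ and all v ∈ J^a, w ∈ J^b; and (fairness) for every edge e: a → b of Γ and every v ∈ J^a, the family (trace(A^e_{vw} ∘ Φ^e_{vw}))_{w ∈ J^b} is unconditionally summable with sum δ(e). Then for every edge e: a → b of Γ and all v ∈ J^a, w ∈ J^b: every root of the characteristic polynomial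 of A^e_{vw} ∘ Φ^e_{vw} is a strictly positive real number, and the eigenvalue multiset of A^{ē}_{wv} ∘ Φ^{ē}_{wv} equals the image under λ ↦ λ⁻¹ of the eigenvalue multiset of A^e_{vw} ∘ Φ^e_{vw}. -/
open scoped ComplexInnerProductSpace

/-!
The composite `T = A ∘ Φ` satisfies `⟪T x, x⟫ = ⟪Φ x, Φ x⟫`, so it is a positive operator, and the
zigzag equation makes it positive definite. The zigzag equation also says that `Ψ = Φ^{ē}` inverts
`Φ = Φ^e`, hence its adjoint `B` inverts `A`. If `T x = r x` with `r` real and nonzero, then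
`(B ∘ Ψ) (Φ x) = B x = r⁻¹ Φ x`, so `Φ` carries an eigenbasis of `T` to an eigenbasis of `B ∘ Ψ`
with inverted eigenvalues.
-/

theorem injective_of_heq_comp.{u, v} {α γ : Sort u} {β : Sort v} {f : α → β} {g : β → γ}
    (h : ∀ x, HEq (g (f x)) x) : Function.Injective f := fun x y hxy =>
  eq_of_heq ((h x).symm.trans ((heq_of_eq (congrArg g hxy)).trans (h y)))

theorem exists_basis_apply_eq_of_bijective {R S M N ι : Type*} [Semiring R] [Semiring S]
    {σ : R →+* S} {σ' : S →+* R} [RingHomInvPair σ σ']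
    [AddCommMonoid M] [Module R M] [AddCommMonoid N] [Module S N]
    (b : Module.Basis ι R M) {f : M →ₛₗ[σ] N} (hf : Function.Bijective f) :
    ∃ c : Module.Basis ι S N, ∀ i, c i = f (b i) := by
  have hli : LinearIndependent S (f ∘ b) :=
    b.linearIndependent.map_of_injective_injectiveₛ σ' f.toAddMonoidHom
      (Function.LeftInverse.injective (g := σ) fun _ => RingHomInvPair.comp_apply_eq₂)
      hf.injective fun s x => by simp
  have hspan : Submodule.span S (Set.range (f ∘ b)) = ⊤ := by
    rw [Set.range_comp, Submodule.span_image, b.span_eq, Submodule.map_top,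
      LinearMap.range_eq_top.mpr hf.surjective]
  exact ⟨.mk hli hspan.ge, fun i => Module.Basis.mk_apply hli hspan.ge i⟩

theorem roots_charpoly_eq_map_of_basis {R M ι : Type*} [Fintype ι] [CommRing R] [IsDomain R]
    [AddCommGroup M] [Module R M] [Module.Finite R M] [Module.Free R M]
    (b : Module.Basis ι R M) {T : M →ₗ[R] M} {μ : ι → R} (h : ∀ i, T (b i) = μ i • b i) :
    T.charpoly.roots = Finset.univ.val.map μ := by
  classical
  have hdiag : LinearMap.toMatrix b b T = Matrix.diagonal μ := by
    ext i j
    obtain rfl | hij := eq_or_ne i j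
    · simp [LinearMap.toMatrix_apply, h]
    · simp [LinearMap.toMatrix_apply, h, hij]
  rw [← LinearMap.charpoly_toMatrix T b, hdiag, Matrix.charpoly_diagonal]
  simpa using Polynomial.roots_multiset_prod_X_sub_C (Finset.univ.val.map μ)

theorem apply_eq_inv_smul_of_leftInverse {K L M N : Type*} [DivisionSemiring K] [DivisionSemiring L]
    {σ : K →+* L} [AddCommMonoid M] [Module K M] [AddCommMonoid N] [Module L N]
    {A : N → M} {B : M →ₛₗ[σ] N} (hBA : Function.LeftInverse B A) {c : K} (hc : c ≠ 0)
    {x : M} {y : N} (h : A y = c • x) : B x = (σ c)⁻¹ • y := by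
  rw [eq_inv_smul_iff₀ ((map_ne_zero σ).mpr hc), ← map_smulₛₗ, ← h, hBA]

section ConjAdjoint

open scoped InnerProductSpace

variable {𝕜 E F : Type*} [RCLike 𝕜]
  [NormedAddCommGroup E] [InnerProductSpace 𝕜 E] [NormedAddCommGroup F] [InnerProductSpace 𝕜 F]

/-- `IsConjAdjoint Φ A` says that the conjugate-linear map `A` is an adjoint of the
conjugate-linear map `Φ`. It replaces Mathlib's `LinearMap.adjoint`, which is for linear maps; here
`⟪Φ x, y⟫` is linear in both `x` and `y`, so `A y` stands on the left of `⟪A y, x⟫`. -/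
def IsConjAdjoint (Φ : E →ₗ⋆[𝕜] F) (A : F →ₗ⋆[𝕜] E) : Prop :=
  ∀ x y, ⟪Φ x, y⟫_𝕜 = ⟪A y, x⟫_𝕜

namespace IsConjAdjoint

variable {Φ : E →ₗ⋆[𝕜] F} {A : F →ₗ⋆[𝕜] E} {Ψ : F →ₗ⋆[𝕜] E} {B : E →ₗ⋆[𝕜] F}

theorem leftInverse (hA : IsConjAdjoint Φ A) (hB : IsConjAdjoint Ψ B)
    (hΦΨ : Function.LeftInverse Φ Ψ) : Function.LeftInverse B A := fun y =>
  ext_inner_right 𝕜 fun z => calc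
    ⟪B (A y), z⟫_𝕜 = ⟪Ψ z, A y⟫_𝕜 := (hB z (A y)).symm
    _ = starRingEnd 𝕜 ⟪Φ (Ψ z), y⟫_𝕜 := by rw [hA, inner_conj_symm]
    _ = ⟪y, z⟫_𝕜 := by rw [hΦΨ, inner_conj_symm]

theorem isSymmetric_comp (hA : IsConjAdjoint Φ A) :
    (A.comp Φ : E →ₗ[𝕜] E).IsSymmetric := fun x y => calc
  ⟪A (Φ x), y⟫_𝕜 = ⟪Φ y, Φ x⟫_𝕜 := (hA y (Φ x)).symm
  _ = starRingEnd 𝕜 ⟪Φ x, Φ y⟫_𝕜 := (inner_conj_symm _ _).symm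
  _ = starRingEnd 𝕜 ⟪A (Φ y), x⟫_𝕜 := by rw [hA x]
  _ = ⟪x, A (Φ y)⟫_𝕜 := inner_conj_symm _ _

theorem eigenvalue_eq_norm_sq_div (hA : IsConjAdjoint Φ A) {μ : 𝕜} {x : E}
    (hx : Module.End.HasEigenvector (A.comp Φ : E →ₗ[𝕜] E) μ x) :
    μ = ((‖Φ x‖ ^ 2 / ‖x‖ ^ 2 : ℝ) : 𝕜) := by
  have hTx : A (Φ x) = μ • x := hx.apply_eq_smul
  have hconj : starRingEnd 𝕜 μ * (‖x‖ : 𝕜) ^ 2 = (‖Φ x‖ : 𝕜) ^ 2 := by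
    rw [← inner_self_eq_norm_sq_to_K, ← inner_smul_left, ← hTx, ← hA x (Φ x),
      inner_self_eq_norm_sq_to_K]
  have hnorm : (‖x‖ : 𝕜) ^ 2 ≠ 0 := by simpa using hx.2
  apply (starRingEnd 𝕜).injective
  rw [RCLike.conj_ofReal, eq_div_of_mul_eq hnorm hconj]
  simp

theorem exists_pos_of_hasEigenvalue (hA : IsConjAdjoint Φ A) (hΦ : Function.Injective Φ) {μ : 𝕜}
    (hμ : Module.End.HasEigenvalue (A.comp Φ : E →ₗ[𝕜] E) μ) : ∃ r : ℝ, 0 < r ∧ μ = r := by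
  obtain ⟨x, hx⟩ := hμ.exists_hasEigenvector
  have hx₀ : 0 < ‖x‖ := norm_pos_iff.mpr hx.2
  have hΦx₀ : 0 < ‖Φ x‖ := norm_pos_iff.mpr ((map_ne_zero_iff Φ hΦ).mpr hx.2)
  exact ⟨_, by positivity, hA.eigenvalue_eq_norm_sq_div hx⟩

variable [FiniteDimensional 𝕜 E] [FiniteDimensional 𝕜 F]

theorem roots_charpoly_comp_eq_map_inv (hA : IsConjAdjoint Φ A) (hB : IsConjAdjoint Ψ B)
    (hΨΦ : Function.LeftInverse Ψ Φ) (hΦΨ : Function.LeftInverse Φ Ψ) :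
    (B.comp Ψ : F →ₗ[𝕜] F).charpoly.roots =
      (A.comp Φ : E →ₗ[𝕜] E).charpoly.roots.map fun μ => μ⁻¹ := by
  have hT := hA.isSymmetric_comp
  have hne : ∀ i, hT.eigenvalues rfl i ≠ 0 := fun i h₀ => by
    obtain ⟨r, hr, h⟩ := hA.exists_pos_of_hasEigenvalue hΨΦ.injective
      (hT.hasEigenvalue_eigenvalues rfl i)
    exact hr.ne' (RCLike.ofReal_injective (h.symm.trans (congrArg _ h₀)))
  obtain ⟨c, hc⟩ := exists_basis_apply_eq_of_bijective
    (hT.eigenvectorBasis rfl).toBasis (f := Φ) ⟨hΨΦ.injective, hΦΨ.surjective⟩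
  have hBΨ : ∀ i, (B.comp Ψ : F →ₗ[𝕜] F) (c i) = (hT.eigenvalues rfl i : 𝕜)⁻¹ • c i := fun i => by
    rw [hc, OrthonormalBasis.coe_toBasis]
    change B (Ψ (Φ _)) = _
    rw [hΨΦ, apply_eq_inv_smul_of_leftInverse (hA.leftInverse hB hΦΨ)
      (RCLike.ofReal_ne_zero.mpr (hne i)) (hT.apply_eigenvectorBasis rfl i), RCLike.conj_ofReal]
  rw [roots_charpoly_eq_map_of_basis c hBΨ, hT.roots_charpoly_eq_eigenvalues rfl, Multiset.map_map]
  rfl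

end IsConjAdjoint

-- To be used with `i = e` and `j = bar (bar e)`, which are equal only propositionally.
theorem roots_charpoly_comp_eq_map_inv_of_heq {I : Type*} {K : I → Type*}
    [∀ i, NormedAddCommGroup (K i)] [∀ i, InnerProductSpace 𝕜 (K i)]
    [∀ i, FiniteDimensional 𝕜 (K i)] [FiniteDimensional 𝕜 F] {i j : I} (hij : j = i)
    {Φ : K i →ₗ⋆[𝕜] F} {A : F →ₗ⋆[𝕜] K i} {Ψ : F →ₗ⋆[𝕜] K j} {B : K j →ₗ⋆[𝕜] F}
    (hA : IsConjAdjoint Φ A) (hB : IsConjAdjoint Ψ B) (hΨΦ : ∀ x, HEq (Ψ (Φ x)) x)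
    (hΨ : Function.Injective Ψ) :
    (B.comp Ψ : F →ₗ[𝕜] F).charpoly.roots =
      (A.comp Φ : K i →ₗ[𝕜] K i).charpoly.roots.map fun μ => μ⁻¹ := by
  subst hij
  have hleft : Function.LeftInverse Ψ Φ := fun x => eq_of_heq (hΨΦ x)
  exact hA.roots_charpoly_comp_eq_map_inv hB hleft (hleft.rightInverse_of_injective hΨ)

end ConjAdjoint

theorem eigenvalues_of_fundamental_solution_antilinear_maps_general {𝕜 V E : Type*} [RCLike 𝕜]
    {src tgt : E → V} {bar : E → E} (bar_bar : Function.Involutive bar)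
    (src_bar : ∀ e, src (bar e) = tgt e) {J : V → Type*}
    {H : E → (Σ a, J a) → (Σ a, J a) → Type*}
    [∀ e v w, NormedAddCommGroup (H e v w)] [∀ e v w, InnerProductSpace 𝕜 (H e v w)]
    [∀ e v w, FiniteDimensional 𝕜 (H e v w)]
    (Φ : ∀ e v w, H e v w →ₗ⋆[𝕜] H (bar e) w v) (A : ∀ e v w, H (bar e) w v →ₗ⋆[𝕜] H e v w)
    (hadj : ∀ e (v w : Σ a, J a), v.1 = src e → w.1 = tgt e → IsConjAdjoint (Φ e v w) (A e v w))
    (hzig : ∀ e (v w : Σ a, J a), v.1 = src e → w.1 = tgt e →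
      ∀ x, HEq (Φ (bar e) w v (Φ e v w x)) x)
    (e : E) (v w : Σ a, J a) (hv : v.1 = src e) (hw : w.1 = tgt e) :
    (∀ μ ∈ ((A e v w).comp (Φ e v w)).charpoly.roots, ∃ r : ℝ, 0 < r ∧ μ = (r : 𝕜)) ∧
      ((A (bar e) w v).comp (Φ (bar e) w v)).charpoly.roots =
        ((A e v w).comp (Φ e v w)).charpoly.roots.map fun μ => μ⁻¹ := by
  have hw' : w.1 = src (bar e) := hw.trans (src_bar e).symm
  have hv' : v.1 = tgt (bar e) := by rw [hv, ← src_bar, bar_bar]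
  refine ⟨fun μ hμ => ?_, ?_⟩
  · exact (hadj e v w hv hw).exists_pos_of_hasEigenvalue (injective_of_heq_comp (hzig e v w hv hw))
      ((Module.End.hasEigenvalue_iff_isRoot_charpoly _ μ).mpr (Polynomial.isRoot_of_mem_roots hμ))
  · exact roots_charpoly_comp_eq_map_inv_of_heq (K := fun f => H f v w) (bar_bar e)
      (hadj e v w hv hw) (hadj (bar e) w v hw' hv') (hzig e v w hv hw)
      (injective_of_heq_comp (hzig (bar e) w v hw' hv'))

theorem eigenvalues_of_fundamental_solution_antilinear_maps
    {Γ : DiGraph} (D : BidirectedWeights Γ)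
    -- an indexing set `J a` for each vertex `a` of `Γ`; indices are packaged
    -- as pairs `v = ⟨a, j⟩` with `j ∈ J a`
    (J : Γ.V → Type)
    -- a finite-dimensional complex inner product space `H e v w` for each edge `e` and
    -- indices `v, w`
    (H : Γ.E → (Σ a, J a) → (Σ a, J a) → Type)
    [∀ e v w, NormedAddCommGroup (H e v w)]
    [∀ e v w, InnerProductSpace ℂ (H e v w)]
    [∀ e v w, FiniteDimensional ℂ (H e v w)]
    -- conjugate-linear maps `Φ^e_{vw} : H^e_{vw} → H^{ē}_{wv}` and adjoints `A^e_{vw}`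
    (Φ : ∀ e v w, H e v w →ₗ⋆[ℂ] H (D.bar e) w v)
    (A : ∀ e v w, H (D.bar e) w v →ₗ⋆[ℂ] H e v w)
    (hadj : ∀ (e : Γ.E) (v w : Σ a, J a), v.1 = Γ.src e → w.1 = Γ.tgt e →
      ∀ (x : H e v w) (y : H (D.bar e) w v), ⟪Φ e v w x, y⟫ = ⟪A e v w y, x⟫)
    -- (zigzag) `Φ^{ē}_{wv} ∘ Φ^e_{vw} = id` (stated with `HEq` since the codomain
    -- `H (bar (bar e)) v w` is only propositionally equal to `H e v w`)
    (hzig : ∀ (e : Γ.E) (v w : Σ a, J a), v.1 = Γ.src e → w.1 = Γ.tgt e →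
      ∀ x : H e v w, HEq (Φ (D.bar e) w v (Φ e v w x)) x)
    -- (fairness) the traces of `A^e_{vw} ∘ Φ^e_{vw}` over `w ∈ J^b` sum to `δ e`
    (hfair : ∀ (e : Γ.E) (v : Σ a, J a), v.1 = Γ.src e →
      HasSum (fun w : {w : Σ a, J a // w.1 = Γ.tgt e} =>
        LinearMap.trace ℂ (H e v w.1) ((A e v w.1).comp (Φ e v w.1)))
        ((D.δ e : ℂ))) :
    ∀ (e : Γ.E) (v w : Σ a, J a), v.1 = Γ.src e → w.1 = Γ.tgt e →
      (∀ μ ∈ ((A e v w).comp (Φ e v w)).charpoly.roots, ∃ r : ℝ, 0 < r ∧ μ = (r : ℂ)) ∧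
        ((A (D.bar e) w v).comp (Φ (D.bar e) w v)).charpoly.roots =
          (((A e v w).comp (Φ e v w)).charpoly.roots).map fun μ => μ⁻¹ :=
  eigenvalues_of_fundamental_solution_antilinear_maps_general D.bar_bar D.src_bar Φ A hadj hzig
end

section
/- Let (Λ, w, π) be a balanced Γ-fair graph over a weighted bidirected graph (Γ, δ, ‾), and assume that for every edge e: a → b of Γ and all vertices v, w of Λ with π(v) = a and π(w) = b, the set Λ^e(v,w) := {ε ∈ E(Λ) : source(ε) = v, target(ε) = w, π(ε) = e} is finite. Then there exist, for every edge e: a → b of Γ and all v ∈ π⁻¹(a), w ∈ π⁻¹(b): a finite-dimensional complex inner product space H^e_{vw}, a bijective conjugate-linear map Φ^e_{vw}: H^e_{vw} → H^{ē}_{wv}, and a conjugate-linear adjoint A^e_{vw}: H^{ē}_{wv} → H^e_{vw} of Φ^e_{vw}, such that: (i) Φ^{ē}_{wv} ∘ Φ^e_{vw} = id on H^e_{vw} for all e, v, w; (ii) for every edge e: a → b of Γ and every v ∈ π⁻¹(a), the family (trace(A^e_{vw} ∘ Φ^e_{vw}))_{w ∈ π⁻¹(b)} is unconditionally summable with sum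 δ(e); and (iii) for all e, v, w, the eigenvalue multiset of A^e_{vw} ∘ Φ^e_{vw} equals the multiset {w(ε) : ε ∈ Λ^e(v,w)} regarded as a multiset of complex numbers. -/
open scoped ComplexInnerProductSpace

/-- A `Γ`-fundamental-solution witness for a balanced `Γ`-fair graph `(Λ, w, π)`:
finite-dimensional complex inner product spaces `H e v w'`, bijective conjugate-linear
maps `Φ^e_{vw'} : H^e_{vw'} → H^{ē}_{w'v}` with conjugate-linear adjoints `A^e_{vw'}`,
satisfying the zigzag relation, the fairness (trace) condition, and whose eigenvalue
multisets are the weight multisets of the fibers of `π`. -/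
structure FundamentalSolutionWitness {Γ Λ : DiGraph} (D : BidirectedWeights Γ)
    (w : Λ.E → ℝ) (π : DiGraphHom Λ Γ)
    (hfin : ∀ (e : Γ.E) (v u : Λ.V),
      {ε : Λ.E | Λ.src ε = v ∧ Λ.tgt ε = u ∧ π.onE ε = e}.Finite) where
  H : Γ.E → Λ.V → Λ.V → Type
  [normed : ∀ e v u, NormedAddCommGroup (H e v u)]
  [ips : ∀ e v u, InnerProductSpace ℂ (H e v u)]
  [fd : ∀ e v u, FiniteDimensional ℂ (H e v u)]
  Φ : ∀ e v u, H e v u →ₗ⋆[ℂ] H (D.bar e) u v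
  A : ∀ e v u, H (D.bar e) u v →ₗ⋆[ℂ] H e v u
  Φ_bij : ∀ (e : Γ.E) (v u : Λ.V), π.onV v = Γ.src e → π.onV u = Γ.tgt e →
    Function.Bijective (Φ e v u)
  adj : ∀ (e : Γ.E) (v u : Λ.V), π.onV v = Γ.src e → π.onV u = Γ.tgt e →
    ∀ (x : H e v u) (y : H (D.bar e) u v), ⟪Φ e v u x, y⟫ = ⟪A e v u y, x⟫
  /-- (i) the zigzag relation `Φ^{ē}_{uv} ∘ Φ^e_{vu} = id`, stated with `HEq` since
  `H (bar (bar e)) v u` is only propositionally equal to `H e v u`. -/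
  zigzag : ∀ (e : Γ.E) (v u : Λ.V), π.onV v = Γ.src e → π.onV u = Γ.tgt e →
    ∀ x : H e v u, HEq (Φ (D.bar e) u v (Φ e v u x)) x
  /-- (ii) fairness: the traces of `A^e_{vu} ∘ Φ^e_{vu}` over `u ∈ π⁻¹(b)` sum to `δ e`. -/
  fair : ∀ (e : Γ.E) (v : Λ.V), π.onV v = Γ.src e →
    HasSum (fun u : {u : Λ.V // π.onV u = Γ.tgt e} =>
      LinearMap.trace ℂ (H e v u.1) ((A e v u.1).comp (Φ e v u.1))) ((D.δ e : ℂ))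
  /-- (iii) the eigenvalue multiset of `A^e_{vu} ∘ Φ^e_{vu}` is the multiset of weights
  of the edges of `Λ` from `v` to `u` lying over `e`. -/
  spectrum_eq : ∀ (e : Γ.E) (v u : Λ.V), π.onV v = Γ.src e → π.onV u = Γ.tgt e →
    ((A e v u).comp (Φ e v u)).charpoly.roots =
      ((hfin e v u).toFinset.val.map fun ε => ((w ε : ℂ)))

/-!
Let `H^e_{vu}` be the Hermitian space with orthonormal basis the edges of `Λ` from `v` to `u` over
`e`. The involution `ε ↦ ε̄` of a balanced graph gives an antiunitary `J : H^e_{vu} → H^{ē}_{uv}`,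
and the weights give a positive diagonal operator `W` on `H^e_{vu}`. Take `Φ = J W^{1/2}`, whose
adjoint is `A = W^{1/2} J⁻¹`. Then `A Φ = W`, so the eigenvalues of `A Φ` are the weights and
its traces add up to `δ e` by fairness, while `w ε * w ε̄ = 1` says exactly that `Φ` followed by the
corresponding map for `ē` is the identity.
-/

section DiagonalOperators

variable {𝕜 S : Type*} [RCLike 𝕜] [Fintype S]
  {T : EuclideanSpace 𝕜 S →ₗ[𝕜] EuclideanSpace 𝕜 S} {d : S → 𝕜}

theorem toMatrix_basisFun_eq_diagonal [DecidableEq S] (h : ∀ x s, T x s = d s * x s) :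
    T.toMatrix (EuclideanSpace.basisFun S 𝕜).toBasis (EuclideanSpace.basisFun S 𝕜).toBasis =
      Matrix.diagonal d := by
  ext i j
  simp [LinearMap.toMatrix_apply, h, Matrix.diagonal_apply]

theorem trace_eq_sum_of_apply_eq_mul (h : ∀ x s, T x s = d s * x s) :
    LinearMap.trace 𝕜 _ T = ∑ s, d s := by
  classical
  rw [LinearMap.trace_eq_matrix_trace 𝕜 (EuclideanSpace.basisFun S 𝕜).toBasis,
    toMatrix_basisFun_eq_diagonal h, Matrix.trace_diagonal]

theorem roots_charpoly_of_apply_eq_mul (h : ∀ x s, T x s = d s * x s) :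
    T.charpoly.roots = (Finset.univ : Finset S).val.map d := by
  classical
  rw [← LinearMap.charpoly_toMatrix T (EuclideanSpace.basisFun S 𝕜).toBasis,
    toMatrix_basisFun_eq_diagonal h, Matrix.charpoly_diagonal, Finset.prod_eq_multiset_prod,
    ← Polynomial.roots_multiset_prod_X_sub_C (Finset.univ.val.map d), Multiset.map_map]
  rfl

end DiagonalOperators

section ConjMonomial

variable {𝕜 S T : Type*} [RCLike 𝕜]

/-- The conjugate-linear map sending the basis vector at `s` to `c s` times the basis vector at
`σ s`: the conjugate-linear analogue of a monomial (generalized permutation) matrix. -/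
def conjMonomial (σ : S ≃ T) (c : S → 𝕜) : EuclideanSpace 𝕜 S →ₗ⋆[𝕜] EuclideanSpace 𝕜 T where
  toFun x := WithLp.toLp 2 fun t => c (σ.symm t) * starRingEnd 𝕜 (x (σ.symm t))
  map_add' x y := by
    ext t
    simp [mul_add]
  map_smul' a x := by
    ext t
    simp [mul_left_comm]

@[simp]
theorem conjMonomial_apply (σ : S ≃ T) (c : S → 𝕜) (x : EuclideanSpace 𝕜 S) (t : T) :
    conjMonomial σ c x t = c (σ.symm t) * starRingEnd 𝕜 (x (σ.symm t)) := rfl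

theorem conjMonomial_conjMonomial_apply {R : Type*} (σ : S ≃ T) (τ : T ≃ R) (c : S → 𝕜)
    (d : T → 𝕜) (x : EuclideanSpace 𝕜 S) (s : S) :
    conjMonomial τ d (conjMonomial σ c x) (τ (σ s)) =
      d (σ s) * starRingEnd 𝕜 (c s) * x s := by
  simp [mul_assoc]

theorem conjMonomial_symm_leftInverse (σ : S ≃ T) {c : S → 𝕜} {d : T → 𝕜}
    (h : ∀ s, d (σ s) * starRingEnd 𝕜 (c s) = 1) :
    Function.LeftInverse (conjMonomial σ.symm d) (conjMonomial σ c) := fun x => by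
  ext s
  simpa [h] using conjMonomial_conjMonomial_apply σ σ.symm c d x s

theorem conjMonomial_bijective (σ : S ≃ T) {c : S → 𝕜} (hc : ∀ s, c s ≠ 0) :
    Function.Bijective (conjMonomial σ c) := by
  let d : T → 𝕜 := fun t => (starRingEnd 𝕜 (c (σ.symm t)))⁻¹
  have hleft : Function.LeftInverse (conjMonomial σ.symm d) (conjMonomial σ c) :=
    conjMonomial_symm_leftInverse σ fun s => by simp [d, hc]
  have hright : Function.RightInverse (conjMonomial σ.symm d) (conjMonomial σ c) :=
    conjMonomial_symm_leftInverse σ.symm fun t => by simp [d, hc]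
  exact ⟨hleft.injective, hright.surjective⟩

/-- The conjugate-linear adjoint of `conjMonomial σ c`; no conjugate of `c` appears. -/
def conjMonomialAdjoint (σ : S ≃ T) (c : S → 𝕜) :
    EuclideanSpace 𝕜 T →ₗ⋆[𝕜] EuclideanSpace 𝕜 S :=
  conjMonomial σ.symm (c ∘ σ.symm)

theorem inner_conjMonomial_left [Fintype S] [Fintype T] (σ : S ≃ T) (c : S → 𝕜)
    (x : EuclideanSpace 𝕜 S) (y : EuclideanSpace 𝕜 T) :
    inner 𝕜 (conjMonomial σ c x) y = inner 𝕜 (conjMonomialAdjoint σ c y) x := by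
  simp only [PiLp.inner_apply]
  refine Fintype.sum_equiv σ.symm _ _ fun t => ?_
  simp only [conjMonomialAdjoint, conjMonomial_apply, RCLike.inner_apply, Function.comp_apply,
    Equiv.symm_symm, Equiv.apply_symm_apply, map_mul, RCLike.conj_conj]
  ring

theorem conjMonomialAdjoint_comp_conjMonomial_apply (σ : S ≃ T) (c : S → 𝕜)
    (x : EuclideanSpace 𝕜 S) (s : S) :
    (conjMonomialAdjoint σ c).comp (conjMonomial σ c) x s = (‖c s‖ ^ 2 : ℝ) * x s := by
  simp [conjMonomialAdjoint, ← mul_assoc, RCLike.mul_conj]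

end ConjMonomial

theorem euclideanSpace_heq_of_forall_apply_eq {𝕜 ι : Type*} {s t : Set ι} (hst : s = t)
    {x : EuclideanSpace 𝕜 s} {y : EuclideanSpace 𝕜 t}
    (hxy : ∀ i (hs : i ∈ s) (ht : i ∈ t), x ⟨i, hs⟩ = y ⟨i, ht⟩) : HEq x y := by
  subst hst
  refine heq_of_eq ?_
  ext ⟨i, hi⟩
  exact hxy i hi hi

namespace DiGraphHom

variable {Γ Λ : DiGraph} (π : DiGraphHom Λ Γ)

/-- The set `Λ^e(v, u)` of edges of `Λ` from `v` to `u` lying over `e`. -/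
abbrev edgesBetween (e : Γ.E) (v u : Λ.V) : Set Λ.E :=
  {ε | Λ.src ε = v ∧ Λ.tgt ε = u ∧ π.onE ε = e}

/-- The edges with source `v` over `e`, sorted by their targets. -/
def sigmaEdgesBetweenEquiv (e : Γ.E) (v : Λ.V) :
    (Σ u : {u : Λ.V // π.onV u = Γ.tgt e}, π.edgesBetween e v u) ≃
      {ε : Λ.E // Λ.src ε = v ∧ π.onE ε = e} where
  toFun p := ⟨p.2, p.2.2.1, p.2.2.2.2⟩
  invFun ε := ⟨⟨Λ.tgt ε, by rw [← π.map_tgt, ε.2.2]⟩, ε, ε.2.1, rfl, ε.2.2⟩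
  left_inv := by
    rintro ⟨⟨u, hu⟩, ⟨ε, hε⟩⟩
    obtain rfl : Λ.tgt ε = u := hε.2.1
    rfl
  right_inv _ := rfl

theorem hasSum_sum_edgesBetween {M : Type*} [AddCommMonoid M] [TopologicalSpace M]
    [ContinuousAdd M] [RegularSpace M] {f : Λ.E → M} {a : M} {e : Γ.E} {v : Λ.V}
    [∀ u, Fintype (π.edgesBetween e v u)]
    (hf : HasSum (fun ε : {ε : Λ.E // Λ.src ε = v ∧ π.onE ε = e} => f ε) a) :
    HasSum (fun u : {u : Λ.V // π.onV u = Γ.tgt e} => ∑ ε : π.edgesBetween e v u, f ε) a :=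
  ((π.sigmaEdgesBetweenEquiv e v).hasSum_iff.2 hf).sigma fun _ => hasSum_fintype _

end DiGraphHom

namespace IsBalanced

variable {Γ Λ : DiGraph} {D : BidirectedWeights Γ} {w : Λ.E → ℝ} {π : DiGraphHom Λ Γ}
  (hbal : IsBalanced D w π)

/-- A chosen involution `ε ↦ ε̄` of the edges of a balanced graph. -/
noncomputable def bar : Λ.E → Λ.E := hbal.choose

theorem bar_bar (ε : Λ.E) : hbal.bar (hbal.bar ε) = ε := hbal.choose_spec.1 ε

theorem weight_mul_weight_bar (ε : Λ.E) : w ε * w (hbal.bar ε) = 1 :=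
  hbal.choose_spec.2.2.2.1 ε

theorem bar_mem_edgesBetween {e : Γ.E} {v u : Λ.V} {ε : Λ.E} (hε : ε ∈ π.edgesBetween e v u) :
    hbal.bar ε ∈ π.edgesBetween (D.bar e) u v := by
  obtain ⟨-, src_bar, tgt_bar, -, onE_bar⟩ := hbal.choose_spec
  obtain ⟨rfl, rfl, rfl⟩ := hε
  exact ⟨src_bar ε, tgt_bar ε, onE_bar ε⟩

/-- The bijection `Λ^e(v, u) ≃ Λ^ē(u, v)` given by `ε ↦ ε̄`. -/
noncomputable def barEquiv (e : Γ.E) (v u : Λ.V) :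
    π.edgesBetween e v u ≃ π.edgesBetween (D.bar e) u v where
  toFun ε := ⟨hbal.bar ε, hbal.bar_mem_edgesBetween ε.2⟩
  invFun ε := ⟨hbal.bar ε, by simpa only [D.bar_bar] using hbal.bar_mem_edgesBetween ε.2⟩
  left_inv ε := Subtype.ext (hbal.bar_bar ε)
  right_inv ε := Subtype.ext (hbal.bar_bar ε)

/-- The conjugate-linear map `Φ^e_{vu} : H^e_{vu} → H^ē_{uv}`, sending the basis vector at `ε` to
`√(w ε)` times the basis vector at `ε̄`. -/
noncomputable def sqrtWeightMap (e : Γ.E) (v u : Λ.V) :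
    EuclideanSpace ℂ (π.edgesBetween e v u) →ₗ⋆[ℂ]
      EuclideanSpace ℂ (π.edgesBetween (D.bar e) u v) :=
  conjMonomial (hbal.barEquiv e v u) fun ε => (√(w ε) : ℂ)

/-- The conjugate-linear adjoint `A^e_{vu} : H^ē_{uv} → H^e_{vu}` of `Φ^e_{vu}`. -/
noncomputable def sqrtWeightAdjoint (e : Γ.E) (v u : Λ.V) :
    EuclideanSpace ℂ (π.edgesBetween (D.bar e) u v) →ₗ⋆[ℂ]
      EuclideanSpace ℂ (π.edgesBetween e v u) :=
  conjMonomialAdjoint (hbal.barEquiv e v u) fun ε => (√(w ε) : ℂ)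

variable (hw : ∀ ε, 0 < w ε)
include hw

theorem sqrtWeightMap_bijective (e : Γ.E) (v u : Λ.V) :
    Function.Bijective (hbal.sqrtWeightMap e v u) :=
  conjMonomial_bijective _ fun ε => Complex.ofReal_ne_zero.2 (Real.sqrt_ne_zero'.2 (hw ε))

theorem sqrtWeightMap_bar_sqrtWeightMap_heq (e : Γ.E) (v u : Λ.V)
    (x : EuclideanSpace ℂ (π.edgesBetween e v u)) :
    HEq (hbal.sqrtWeightMap (D.bar e) u v (hbal.sqrtWeightMap e v u x)) x := by
  have hsqrt (ε : Λ.E) : √(w (hbal.bar ε)) * √(w ε) = 1 := by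
    rw [← Real.sqrt_mul (hw _).le, mul_comm, hbal.weight_mul_weight_bar, Real.sqrt_one]
  refine euclideanSpace_heq_of_forall_apply_eq (by rw [D.bar_bar]) fun ε hε hε' => ?_
  have hbarbar : (⟨ε, hε⟩ : π.edgesBetween (D.bar (D.bar e)) v u) =
      hbal.barEquiv (D.bar e) u v (hbal.barEquiv e v u ⟨ε, hε'⟩) :=
    Subtype.ext (hbal.bar_bar ε).symm
  calc hbal.sqrtWeightMap (D.bar e) u v (hbal.sqrtWeightMap e v u x) ⟨ε, hε⟩
      = (√(w (hbal.bar ε)) : ℂ) * starRingEnd ℂ (√(w ε) : ℂ) * x ⟨ε, hε'⟩ := by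
        rw [hbarbar]
        exact conjMonomial_conjMonomial_apply _ _ _ _ x _
    _ = x ⟨ε, hε'⟩ := by
        rw [Complex.conj_ofReal, ← Complex.ofReal_mul, hsqrt, Complex.ofReal_one, one_mul]

theorem sqrtWeightAdjoint_comp_sqrtWeightMap_apply (e : Γ.E) (v u : Λ.V)
    (x : EuclideanSpace ℂ (π.edgesBetween e v u)) (ε : π.edgesBetween e v u) :
    (hbal.sqrtWeightAdjoint e v u).comp (hbal.sqrtWeightMap e v u) x ε = (w ε : ℂ) * x ε := by
  have hnorm : ‖(√(w ε) : ℂ)‖ ^ 2 = w ε := by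
    rw [Complex.norm_real, Real.norm_eq_abs, sq_abs, Real.sq_sqrt (hw ε).le]
  exact hnorm ▸ conjMonomialAdjoint_comp_conjMonomial_apply (hbal.barEquiv e v u) _ x ε

theorem trace_sqrtWeightAdjoint_comp (e : Γ.E) (v u : Λ.V) [Fintype (π.edgesBetween e v u)] :
    LinearMap.trace ℂ _ ((hbal.sqrtWeightAdjoint e v u).comp (hbal.sqrtWeightMap e v u)) =
      ∑ ε : π.edgesBetween e v u, (w ε : ℂ) :=
  trace_eq_sum_of_apply_eq_mul (hbal.sqrtWeightAdjoint_comp_sqrtWeightMap_apply hw e v u)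

theorem hasSum_trace_sqrtWeightAdjoint_comp {e : Γ.E} {v : Λ.V} {a : ℝ}
    [∀ u, Finite (π.edgesBetween e v u)]
    (ha : HasSum (fun ε : {ε : Λ.E // Λ.src ε = v ∧ π.onE ε = e} => w ε) a) :
    HasSum (fun u : {u : Λ.V // π.onV u = Γ.tgt e} => LinearMap.trace ℂ _
      ((hbal.sqrtWeightAdjoint e v u).comp (hbal.sqrtWeightMap e v u))) (a : ℂ) := by
  let _ (u : Λ.V) := Fintype.ofFinite (π.edgesBetween e v u)
  simpa only [hbal.trace_sqrtWeightAdjoint_comp hw] using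
    π.hasSum_sum_edgesBetween (f := fun ε => (w ε : ℂ)) (Complex.hasSum_ofReal.2 ha)

theorem roots_charpoly_sqrtWeightAdjoint_comp (e : Γ.E) (v u : Λ.V)
    [Finite (π.edgesBetween e v u)] :
    ((hbal.sqrtWeightAdjoint e v u).comp (hbal.sqrtWeightMap e v u)).charpoly.roots =
      (π.edgesBetween e v u).toFinite.toFinset.val.map fun ε => (w ε : ℂ) := by
  let _ := Fintype.ofFinite (π.edgesBetween e v u)
  rw [roots_charpoly_of_apply_eq_mul (hbal.sqrtWeightAdjoint_comp_sqrtWeightMap_apply hw e v u),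
    Set.Finite.toFinset_eq_toFinset, Set.toFinset, Finset.map_val, Multiset.map_map]
  rfl

end IsBalanced

theorem balanced_fair_graph_gives_fundamental_solution
    {Γ Λ : DiGraph} (D : BidirectedWeights Γ) (w : Λ.E → ℝ) (π : DiGraphHom Λ Γ)
    (hfair : IsFair D w π) (hbal : IsBalanced D w π)
    (hfin : ∀ (e : Γ.E) (v u : Λ.V),
      {ε : Λ.E | Λ.src ε = v ∧ Λ.tgt ε = u ∧ π.onE ε = e}.Finite) :
    Nonempty (FundamentalSolutionWitness D w π hfin) := by
  obtain ⟨hw, hsum⟩ := hfair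
  let _ (e : Γ.E) (v u : Λ.V) : Fintype (π.edgesBetween e v u) := (hfin e v u).fintype
  exact ⟨{
    H := fun e v u => EuclideanSpace ℂ (π.edgesBetween e v u)
    Φ := hbal.sqrtWeightMap
    A := hbal.sqrtWeightAdjoint
    Φ_bij := fun e v u _ _ => hbal.sqrtWeightMap_bijective hw e v u
    adj := fun _ _ _ _ _ => inner_conjMonomial_left _ _
    zigzag := fun e v u _ _ => hbal.sqrtWeightMap_bar_sqrtWeightMap_heq hw e v u
    fair := fun e v hv => hbal.hasSum_trace_sqrtWeightAdjoint_comp hw (hsum e v hv)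
    spectrum_eq := fun e v u _ _ => hbal.roots_charpoly_sqrtWeightAdjoint_comp hw e v u }⟩
end
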